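/- arXiv:1506.02109 — 5 statements merged into one kernel-verified Lean document; each statement's English description precedes it below -/
import Mathlib

section
/- Let θ : G → ℂˣ be a character. Then θ(J)^d = 1, and for every integer a with θ(J) = exp(2πi·a/d) there exists a unique group homomorphism χ̂ : Γ → ℂˣ such that χ̂(g) = θ(g) for all g ∈ G and χ̂(r(λ)) = λ^a for all λ ∈ ℂˣ. In particular every character of G admits a lift to Γ. -/
open Matrix Complex

/-- The distinguished `d`-th root of unity `exp(2πi/d)` as a unit of `ℂ`. -/
noncomputable def primRootUnit (d : ℕ) : ℂˣ :=
  Units.mk0 (Complex.exp (2 * (Real.pi : ℂ) * Complex.I / (d : ℂ))) (Complex.exp_ne_zero _)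

/-!
If `G` and `r(A)` commute elementwise, then `(g, l) ↦ g * r l` is a surjective homomorphism from
`G × A` onto `Γ = G ⊔ r.range`. Hence homomorphisms `θ` on `G` and `ψ` on `A` glue to a
homomorphism on `Γ` as soon as `(g, l) ↦ θ g * ψ l` is trivial on the kernel, that is, as soon as
`θ (r l) = ψ l` whenever `r l ∈ G`. When these `l` are exactly the powers of a single `ζ`, it is
enough to compare the two sides at `ζ`. For `ψ l = l ^ a` this is the condition `θ J = ζ ^ a`, and
such an `a` exists because `θ J` is a `d`-th root of unity.
-/

section Gluing

variable {H A M : Type*} [Group H] {G : Subgroup H}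

theorem monoidHom_sup_ext [Monoid M] {K : Subgroup H} {χ χ' : ↥(G ⊔ K) →* M}
    (hG : ∀ γ : ↥(G ⊔ K), (γ : H) ∈ G → χ γ = χ' γ)
    (hK : ∀ γ : ↥(G ⊔ K), (γ : H) ∈ K → χ γ = χ' γ) : χ = χ' := by
  have sup_le_map_eqLocus : G ⊔ K ≤ (χ.eqLocus χ').map (G ⊔ K).subtype :=
    sup_le (fun g hg => ⟨⟨g, le_sup_left (a := G) hg⟩, hG _ hg, rfl⟩)
      (fun k hk => ⟨⟨k, le_sup_right (b := K) hk⟩, hK _ hk, rfl⟩)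
  ext1 γ
  obtain ⟨γ', hγ', heq⟩ := sup_le_map_eqLocus γ.2
  obtain rfl : γ' = γ := Subtype.ext heq
  exact hγ'

variable [Group A] {r : A →* H}

/-- The product map `(g, l) ↦ g * r l` from `G × A` to the subgroup generated by `G` and the image
of `r`, when these commute elementwise. It presents that subgroup as a quotient of `G × A`. -/
def prodToSupRange (hcomm : ∀ g ∈ G, ∀ l, Commute g (r l)) : G × A →* ↥(G ⊔ r.range) :=
  (Subgroup.inclusion le_sup_left).noncommCoprod
    (r.codRestrict (G ⊔ r.range) fun l => le_sup_right (a := G) ⟨l, rfl⟩)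
    fun g l => Subtype.ext (hcomm g g.2 l)

theorem prodToSupRange_surjective (hcomm : ∀ g ∈ G, ∀ l, Commute g (r l)) :
    Function.Surjective (prodToSupRange hcomm) := by
  rintro ⟨γ, hγ⟩
  have range_eq := MonoidHom.noncommCoprod_range G.subtype r fun g l => hcomm g g.2 l
  rw [Subgroup.range_subtype] at range_eq
  obtain ⟨p, hp⟩ := range_eq ▸ hγ
  exact ⟨p, Subtype.ext hp⟩

variable [CommGroup M] {θ : G →* M} {ψ : A →* M}

theorem ker_prodToSupRange_le_ker_coprod (hcomm : ∀ g ∈ G, ∀ l, Commute g (r l))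
    (hagree : ∀ l (hl : r l ∈ G), θ ⟨r l, hl⟩ = ψ l) :
    (prodToSupRange hcomm).ker ≤ (θ.coprod ψ).ker := by
  rintro ⟨g, l⟩ hgl
  have hg : (g : H) = r l⁻¹ := by
    rw [map_inv]
    exact eq_inv_of_mul_eq_one_left (congrArg Subtype.val hgl)
  have hθ : θ g = ψ l⁻¹ := by
    rw [← hagree l⁻¹ (hg ▸ g.2)]
    exact congrArg θ (Subtype.ext hg)
  rw [MonoidHom.mem_ker, MonoidHom.coprod_apply, hθ, map_inv, inv_mul_cancel]

theorem existsUnique_monoidHom_sup_range (hcomm : ∀ g ∈ G, ∀ l, Commute g (r l))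
    (hagree : ∀ l (hl : r l ∈ G), θ ⟨r l, hl⟩ = ψ l) :
    ∃! χ : ↥(G ⊔ r.range) →* M,
      (∀ (γ : ↥(G ⊔ r.range)) (hγ : (γ : H) ∈ G), χ γ = θ ⟨γ, hγ⟩) ∧
      ∀ (γ : ↥(G ⊔ r.range)) (l : A), (γ : H) = r l → χ γ = ψ l := by
  let χ : ↥(G ⊔ r.range) →* M :=
    (prodToSupRange hcomm).liftOfSurjective (prodToSupRange_surjective hcomm)
      ⟨θ.coprod ψ, ker_prodToSupRange_le_ker_coprod hcomm hagree⟩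
  have χ_apply (γ : ↥(G ⊔ r.range)) (g : G) (l : A) (hγ : (γ : H) = g * r l) :
      χ γ = θ g * ψ l := by
    obtain rfl : γ = prodToSupRange hcomm (g, l) := Subtype.ext hγ
    exact MonoidHom.liftOfRightInverse_comp_apply ..
  have χ_eq_θ (γ : ↥(G ⊔ r.range)) (hγ : (γ : H) ∈ G) : χ γ = θ ⟨γ, hγ⟩ := by
    simpa using χ_apply γ ⟨γ, hγ⟩ 1 (by simp)
  have χ_eq_ψ (γ : ↥(G ⊔ r.range)) (l : A) (hγ : (γ : H) = r l) : χ γ = ψ l := by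
    simpa using χ_apply γ 1 l (by simpa using hγ)
  refine ⟨χ, ⟨χ_eq_θ, χ_eq_ψ⟩, fun χ' ⟨hχ'θ, hχ'ψ⟩ => monoidHom_sup_ext ?_ ?_⟩
  · exact fun γ hγ => (hχ'θ γ hγ).trans (χ_eq_θ γ hγ).symm
  · rintro γ ⟨l, hl⟩
    exact (hχ'ψ γ l hl.symm).trans (χ_eq_ψ γ l hl.symm).symm

end Gluing

section CyclicIntersection

variable {H A : Type*} [Group H] [Group A] {G : Subgroup H} {r : A →* H}

theorem comap_eq_of_inter_range_eq_image (hr : Function.Injective r) {K : Subgroup A}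
    (h : (G : Set H) ∩ Set.range r = r '' K) : G.comap r = K :=
  SetLike.coe_injective <| by
    rw [Subgroup.coe_comap, ← Set.preimage_inter_range, h, Set.preimage_image_eq _ hr]

theorem eq_on_comap_of_eq_generator {M : Type*} [Group M] {θ : G →* M} {ψ : A →* M} {ζ : A}
    (hgen : G.comap r = Subgroup.zpowers ζ) (hζ : r ζ ∈ G) (heq : θ ⟨r ζ, hζ⟩ = ψ ζ)
    (l : A) (hl : r l ∈ G) : θ ⟨r l, hl⟩ = ψ l := by
  obtain ⟨k, rfl⟩ : l ∈ Subgroup.zpowers ζ := hgen ▸ hl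
  have zpow_generator : (⟨r (ζ ^ k), hl⟩ : G) = ⟨r ζ, hζ⟩ ^ k := Subtype.ext (map_zpow r ζ k)
  rw [zpow_generator, map_zpow, heq, map_zpow]

end CyclicIntersection

theorem stmt_3_general {R H : Type*} [CommRing R] [IsDomain R] [Group H] {d : ℕ} [NeZero d]
    {G : Subgroup H} {r : Rˣ →* H} (hcomm : ∀ g ∈ G, ∀ l, Commute g (r l))
    (hGr : G.comap r = rootsOfUnity d R) {ζ : Rˣ} (hζ : IsPrimitiveRoot ζ d) (θ : G →* Rˣ) :
    ∃ hJG : r ζ ∈ G,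
      θ ⟨r ζ, hJG⟩ ^ d = 1 ∧
      (∀ a : ℤ, θ ⟨r ζ, hJG⟩ = ζ ^ a →
        ∃! χ : ↥(G ⊔ r.range) →* Rˣ,
          (∀ (γ : ↥(G ⊔ r.range)) (hγ : (γ : H) ∈ G), χ γ = θ ⟨γ, hγ⟩) ∧
          ∀ (γ : ↥(G ⊔ r.range)) (l : Rˣ), (γ : H) = r l → χ γ = l ^ a) ∧
      ∃ χ : ↥(G ⊔ r.range) →* Rˣ,
        ∀ (γ : ↥(G ⊔ r.range)) (hγ : (γ : H) ∈ G), χ γ = θ ⟨γ, hγ⟩ := by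
  have hgen : G.comap r = Subgroup.zpowers ζ := hGr.trans hζ.zpowers_eq.symm
  have hJG : r ζ ∈ G := hgen.ge (Subgroup.mem_zpowers ζ)
  have hJ_pow : (⟨r ζ, hJG⟩ : G) ^ d = 1 :=
    Subtype.ext (by simp [← map_pow, hζ.pow_eq_one])
  have hθ_pow : θ ⟨r ζ, hJG⟩ ^ d = 1 := by rw [← map_pow, hJ_pow, map_one]
  have lift_of_exponent (a : ℤ) (ha : θ ⟨r ζ, hJG⟩ = ζ ^ a) :=
    existsUnique_monoidHom_sup_range (ψ := zpowGroupHom a) hcomm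
      (eq_on_comap_of_eq_generator hgen hJG ha)
  obtain ⟨a, ha⟩ : θ ⟨r ζ, hJG⟩ ∈ Subgroup.zpowers ζ := hζ.zpowers_eq.ge hθ_pow
  obtain ⟨χ, ⟨hχ, -⟩, -⟩ := lift_of_exponent a ha.symm
  exact ⟨hJG, hθ_pow, lift_of_exponent, χ, hχ⟩

theorem isPrimitiveRoot_primRootUnit {d : ℕ} (hd : d ≠ 0) : IsPrimitiveRoot (primRootUnit d) d :=
  IsPrimitiveRoot.coe_units_iff.1 (Complex.isPrimitiveRoot_exp d hd)

theorem coe_primRootUnit_zpow (d : ℕ) (a : ℤ) :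
    ((primRootUnit d ^ a : ℂˣ) : ℂ) =
      Complex.exp (2 * (Real.pi : ℂ) * Complex.I * (a : ℂ) / (d : ℂ)) := by
  rw [Units.val_zpow_eq_zpow_val, primRootUnit, Units.val_mk0, ← Complex.exp_int_mul]
  congr 1
  ring

/-- For a character `θ : G → ℂˣ`, one has `J ∈ G` and `θ(J)^d = 1`, and for every
integer `a` with `θ(J) = exp(2πi·a/d)` there is a unique homomorphism `χ̂ : Γ → ℂˣ` restricting
to `θ` on `G` and sending `r(λ)` to `λ^a`.  In particular every character of `G` admits a lift
to `Γ`. -/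
theorem stmt_3 (n d : ℕ) (hn : 1 ≤ n) (hd : 1 ≤ d)
    (G : Subgroup (GL (Fin n) ℂ))
    (r : ℂˣ →* GL (Fin n) ℂ)
    (hrinj : Function.Injective r)
    (hcomm : ∀ g ∈ G, ∀ l : ℂˣ, g * r l = r l * g)
    (hGr : (G : Set (GL (Fin n) ℂ)) ∩ Set.range r = r '' {l : ℂˣ | l ^ d = 1})
    (J : GL (Fin n) ℂ) (hJ : J = r (primRootUnit d))
    (θ : ↥G →* ℂˣ) :
    ∃ hJG : J ∈ G,
      θ ⟨J, hJG⟩ ^ d = 1 ∧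
      (∀ a : ℤ,
        ((θ ⟨J, hJG⟩ : ℂˣ) : ℂ)
            = Complex.exp (2 * (Real.pi : ℂ) * Complex.I * (a : ℂ) / (d : ℂ)) →
        ∃! χ : ↥(G ⊔ r.range) →* ℂˣ,
          (∀ (γ : ↥(G ⊔ r.range)) (hγ : (γ : GL (Fin n) ℂ) ∈ G),
            χ γ = θ ⟨(γ : GL (Fin n) ℂ), hγ⟩) ∧
          (∀ (γ : ↥(G ⊔ r.range)) (l : ℂˣ),
            (γ : GL (Fin n) ℂ) = r l → χ γ = l ^ a)) ∧
      ∃ χ : ↥(G ⊔ r.range) →* ℂˣ,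
        ∀ (γ : ↥(G ⊔ r.range)) (hγ : (γ : GL (Fin n) ℂ) ∈ G),
          χ γ = θ ⟨(γ : GL (Fin n) ℂ), hγ⟩ := by
  subst hJ
  have : NeZero d := ⟨Nat.one_le_iff_ne_zero.1 hd⟩
  obtain ⟨hJG, hpow, hlift, hexists⟩ := stmt_3_general hcomm
    (comap_eq_of_inter_range_eq_image (K := rootsOfUnity d ℂ) hrinj hGr)
    (isPrimitiveRoot_primRootUnit (NeZero.ne d)) θ
  exact ⟨hJG, hpow,
    fun a ha => hlift a (Units.ext (ha.trans (coe_primRootUnit_zpow d a).symm)), hexists⟩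
end

section
/- Let G be a subgroup of GL(n,ℂ) and θ : G → ℂˣ a character. There exists a natural number M such that for every integer n' ≥ M and every v ∈ ℂⁿ the following are equivalent: (i) v is θ-semistable for G; (ii) there exist an integer k ≥ 1 and a (θ,k)-equivariant polynomial f of total degree at most k·n' with f(v) ≠ 0. (This identifies the affine semistable locus with the semistable locus for the induced linearization on ℙ(V ⊕ ℂ) with O(n') for all large n'.) -/
open Matrix Complex MvPolynomial

/-- A polynomial `f` on `ℂⁿ` is `(θ,k)`-equivariant for the subgroup `G ≤ GL(n,ℂ)` if
`f(h·x) = θ(h)^k f(x)` for all `h ∈ G` and `x ∈ ℂⁿ`. -/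
def IsEquivariant {n : ℕ} (G : Subgroup (GL (Fin n) ℂ)) (θ : ↥G →* ℂˣ) (k : ℕ)
    (f : MvPolynomial (Fin n) ℂ) : Prop :=
  ∀ (h : ↥G) (x : Fin n → ℂ),
    eval (Matrix.mulVec (((h : GL (Fin n) ℂ) : Matrix (Fin n) (Fin n) ℂ)) x) f
      = ((θ h : ℂˣ) : ℂ) ^ k * eval x f

/-- A point `v ∈ ℂⁿ` is `θ`-semistable for `G` if some `(θ,k)`-equivariant polynomial
(with `k ≥ 1`) does not vanish at `v`. -/
def IsSemistable {n : ℕ} (G : Subgroup (GL (Fin n) ℂ)) (θ : ↥G →* ℂˣ)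
    (v : Fin n → ℂ) : Prop :=
  ∃ k : ℕ, 1 ≤ k ∧ ∃ f : MvPolynomial (Fin n) ℂ,
    IsEquivariant G θ k f ∧ eval v f ≠ 0

/-!
By Noetherianity the ideal generated by the equivariant polynomials of all positive weights is
generated by finitely many of them, and these do not all vanish at a semistable point. Their
maximal degree serves as `M`, since `M ≤ k * n'` as soon as `k ≥ 1` and `n' ≥ M`.
-/

theorem exists_mem_map_ne_zero_of_mem_span {R A : Type*} [Semiring R] [Semiring A] {φ : R →+* A}
    {T : Set R} {f : R} (hf : f ∈ Ideal.span T) (hφ : φ f ≠ 0) : ∃ g ∈ T, φ g ≠ 0 := by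
  contrapose! hφ
  have span_le_ker : Ideal.span T ≤ RingHom.ker φ := Ideal.span_le.2 hφ
  exact span_le_ker hf

theorem exists_finset_subset_forall_exists_map_ne_zero {R : Type*} (A : Type*) [Semiring R]
    [IsNoetherianRing R] [Semiring A] (S : Set R) :
    ∃ T : Finset R, ↑T ⊆ S ∧ ∀ φ : R →+* A, ∀ f ∈ S, φ f ≠ 0 → ∃ g ∈ T, φ g ≠ 0 := by
  obtain ⟨T, hTS, span_eq⟩ := (Submodule.fg_span_iff_fg_span_finset_subset S).1
    (IsNoetherian.noetherian (Ideal.span S))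
  refine ⟨T, hTS, fun φ f hf hφ ↦ exists_mem_map_ne_zero_of_mem_span ?_ hφ⟩
  exact span_eq.le (Ideal.subset_span hf)

theorem stmt_6_general {σ R : Type*} [Finite σ] [CommRing R] [IsNoetherianRing R]
    (E : ℕ → Set (MvPolynomial σ R)) :
    ∃ M : ℕ, ∀ n' : ℕ, M ≤ n' → ∀ v : σ → R,
      ((∃ k : ℕ, 1 ≤ k ∧ ∃ f ∈ E k, eval v f ≠ 0) ↔
        ∃ k : ℕ, 1 ≤ k ∧ ∃ f ∈ E k, f.totalDegree ≤ k * n' ∧ eval v f ≠ 0) := by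
  obtain ⟨T, hTE, hT⟩ :=
    exists_finset_subset_forall_exists_map_ne_zero R {f | ∃ k : ℕ, 1 ≤ k ∧ f ∈ E k}
  refine ⟨T.sup totalDegree, fun n' hn' v ↦ ⟨?_, ?_⟩⟩
  · rintro ⟨k, hk, f, hf, hfv⟩
    obtain ⟨g, hgT, hgv⟩ := hT (eval v) f ⟨k, hk, hf⟩ hfv
    obtain ⟨l, hl, hg⟩ := hTE hgT
    have totalDegree_le : g.totalDegree ≤ l * n' := calc
      g.totalDegree ≤ T.sup totalDegree := Finset.le_sup hgT
      _ ≤ n' := hn'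
      _ ≤ l * n' := Nat.le_mul_of_pos_left n' hl
    exact ⟨l, hl, g, hg, totalDegree_le, hgv⟩
  · rintro ⟨k, hk, f, hf, -, hfv⟩
    exact ⟨k, hk, f, hf, hfv⟩

/-- there is an `M` such that for all `n' ≥ M`, a point is `θ`-semistable iff
some `(θ,k)`-equivariant polynomial of total degree at most `k·n'` is nonzero at it. -/
theorem stmt_6 (n : ℕ) (G : Subgroup (GL (Fin n) ℂ)) (θ : ↥G →* ℂˣ) :
    ∃ M : ℕ, ∀ n' : ℕ, M ≤ n' → ∀ v : Fin n → ℂ,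
      (IsSemistable G θ v ↔
        ∃ k : ℕ, 1 ≤ k ∧ ∃ f : MvPolynomial (Fin n) ℂ,
          IsEquivariant G θ k f ∧ f.totalDegree ≤ k * n' ∧ eval v f ≠ 0) :=
  stmt_6_general fun k ↦ {f | IsEquivariant G θ k f}
end

section
/- Let θ : G → ℂˣ be a character. A point v ∈ ℂⁿ is θ-semistable for G if and only if there exist an integer k ≥ 1, an integer m, and a (θ,k)-equivariant polynomial f for G which is in addition an eigenvector for the r-action, i.e., f(r(λ)·x) = λ^m f(x) for all λ ∈ ℂˣ and x ∈ ℂⁿ, such that f(v) ≠ 0. (This is the statement that the θ-semistable locus for G is the union, over all lifts χ̂ of powers of θ to Γ, of the χ̂-semistable loci for Γ.) -/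
open Matrix Complex MvPolynomial

/-!
Decompose a `θ ^ k`-equivariant polynomial into its weight components for the diagonal action of
`r`. A matrix commuting with every `r l` only mixes coordinates of equal weight, so the linear
substitution it defines preserves the weight grading. Hence every weight component is again
equivariant, and some component does not vanish where the polynomial does not vanish.
-/

section WeightGrading

variable {R σ τ M : Type*} [CommSemiring R] [AddCommMonoid M]
  {w : σ → M} {w' : τ → M} {g : σ → MvPolynomial τ R}

lemma isWeightedHomogeneous_bind₁ (hg : ∀ i, IsWeightedHomogeneous w' (g i) (w i))
    {f : MvPolynomial σ R} {m : M} (hf : IsWeightedHomogeneous w f m) :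
    IsWeightedHomogeneous w' (bind₁ g f) m := by
  induction hf using IsWeightedHomogeneous.induction_on with
  | zero => simpa only [map_zero] using isWeightedHomogeneous_zero R w' m
  | add p q _ _ hp hq => simpa only [map_add] using hp.add hq
  | monomial s a hs =>
    rw [bind₁_monomial, ← hs, Finsupp.weight_apply]
    exact (IsWeightedHomogeneous.prod _ _ _ fun i _ => (hg i).pow (s i)).C_mul a

lemma weightedHomogeneousComponent_bind₁ (hg : ∀ i, IsWeightedHomogeneous w' (g i) (w i))
    (m : M) (f : MvPolynomial σ R) :
    weightedHomogeneousComponent w' m (bind₁ g f) =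
      bind₁ g (weightedHomogeneousComponent w m f) := by
  classical
  induction f using MvPolynomial.induction_on' with
  | add p q hp hq => simp only [map_add, hp, hq]
  | monomial s a =>
    have hs : IsWeightedHomogeneous w (monomial s a) (Finsupp.weight w s) :=
      isWeightedHomogeneous_monomial w s a rfl
    rw [weightedHomogeneousComponent_of_mem (isWeightedHomogeneous_bind₁ hg hs),
      weightedHomogeneousComponent_of_mem hs, apply_ite (bind₁ g), map_zero]

lemma exists_eval_weightedHomogeneousComponent_ne_zero (w : σ → M) {f : MvPolynomial σ R}
    {v : σ → R} (hv : eval v f ≠ 0) :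
    ∃ m, eval v (weightedHomogeneousComponent w m f) ≠ 0 := by
  by_contra! hzero
  refine hv ?_
  rw [← sum_weightedHomogeneousComponent w f, map_finsum _ (weightedHomogeneousComponent_finsupp f)]
  exact finsum_eq_zero_of_forall_eq_zero hzero

end WeightGrading

section LinearSubstitution

variable {R σ τ M : Type*} [CommSemiring R] [Fintype τ]

lemma eval_bind₁_toMvPolynomial (A : Matrix σ τ R) (x : τ → R) (f : MvPolynomial σ R) :
    eval x (bind₁ A.toMvPolynomial f) = eval (A *ᵥ x) f := by
  rw [← aeval_eq_eval, aeval_bind₁]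
  simp only [aeval_eq_eval, toMvPolynomial_eval_eq_apply]

lemma isWeightedHomogeneous_toMvPolynomial [AddCommMonoid M] {w : τ → M} {A : Matrix σ τ R}
    {i : σ} {m : M} (hA : ∀ j, A i j ≠ 0 → w j = m) :
    IsWeightedHomogeneous w (A.toMvPolynomial i) m := by
  refine IsWeightedHomogeneous.sum _ _ _ fun j _ => ?_
  by_cases hij : A i j = 0
  · simpa only [hij, map_zero] using isWeightedHomogeneous_zero R w m
  · refine isWeightedHomogeneous_monomial w _ _ ?_
    rw [Finsupp.weight_single, one_smul, hA j hij]

end LinearSubstitution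

lemma zpow_weight {H σ : Type*} [CommGroup H] (l : H) (c : σ → ℤ) (s : σ →₀ ℕ) :
    l ^ Finsupp.weight c s = s.prod fun i e => (l ^ c i) ^ e := by
  induction s using Finsupp.induction_linear with
  | zero => simp only [map_zero, _root_.zpow_zero, Finsupp.prod_zero_index]
  | add s t hs ht =>
    rw [map_add, _root_.zpow_add, hs, ht, Finsupp.prod_add_index' (by simp) fun _ => pow_add _]
  | single i e =>
    rw [Finsupp.weight_single, Finsupp.prod_single_index (by simp), nsmul_eq_mul, mul_comm,
      _root_.zpow_mul, zpow_natCast]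

lemma eval_diagonal_zpow_mulVec {R σ : Type*} [CommSemiring R] [Fintype σ] [DecidableEq σ]
    {c : σ → ℤ} {m : ℤ} {f : MvPolynomial σ R} (hf : IsWeightedHomogeneous c f m)
    (l : Rˣ) (x : σ → R) :
    eval (diagonal (fun i => ((l ^ c i : Rˣ) : R)) *ᵥ x) f = ((l ^ m : Rˣ) : R) * eval x f := by
  induction hf using IsWeightedHomogeneous.induction_on with
  | zero => simp only [map_zero, mul_zero]
  | add p q _ _ hp hq => simp only [map_add, hp, hq, mul_add]
  | monomial s a hs =>
    have hweight : ((l ^ m : Rˣ) : R) = s.prod fun i e => ((l ^ c i : Rˣ) : R) ^ e := by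
      rw [← hs, zpow_weight]
      exact map_finsuppProd (Units.coeHom R) s _
    simp only [eval_monomial, mulVec_diagonal, mul_pow, Finsupp.prod_mul, hweight]
    ring

section InfiniteField

variable {K σ : Type*} [Field K] [Infinite K]

lemma exists_units_pow_ne_one {N : ℕ} (hN : 0 < N) : ∃ l : Kˣ, l ^ N ≠ 1 := by
  classical
  obtain ⟨l, hl⟩ := Infinite.exists_notMem_finset (insert 0 (Polynomial.nthRootsFinset N (1 : K)))
  rw [Finset.mem_insert, Polynomial.mem_nthRootsFinset hN, not_or] at hl
  exact ⟨Units.mk0 l hl.1, fun h => hl.2 (congrArg Units.val h)⟩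

lemma eq_of_forall_units_zpow_eq {a b : ℤ} (h : ∀ l : Kˣ, l ^ a = l ^ b) : a = b := by
  by_contra hab
  obtain ⟨l, hl⟩ := exists_units_pow_ne_one (K := K) (Int.natAbs_pos.2 (sub_ne_zero.2 hab))
  exact hl (pow_natAbs_eq_one.2 (by rw [_root_.zpow_sub, h, mul_inv_cancel]))

variable [Fintype σ] [DecidableEq σ] {c : σ → ℤ} {A : Matrix σ σ K}

lemma weight_eq_of_commute_diagonal_zpow
    (hA : ∀ l : Kˣ, Commute A (diagonal fun i => ((l ^ c i : Kˣ) : K)))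
    {i j : σ} (hij : A i j ≠ 0) : c j = c i := by
  refine eq_of_forall_units_zpow_eq (K := K) fun l => Units.ext ?_
  have hentry := congr_fun₂ (hA l).eq i j
  rw [mul_diagonal, diagonal_mul, mul_comm] at hentry
  exact mul_right_cancel₀ hij hentry

lemma eval_mulVec_weightedHomogeneousComponent
    (hA : ∀ l : Kˣ, Commute A (diagonal fun i => ((l ^ c i : Kˣ) : K)))
    {a : K} {f : MvPolynomial σ K} (hf : ∀ x, eval (A *ᵥ x) f = a * eval x f)
    (m : ℤ) (x : σ → K) :
    eval (A *ᵥ x) (weightedHomogeneousComponent c m f) =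
      a * eval x (weightedHomogeneousComponent c m f) := by
  have hgraded (i : σ) : IsWeightedHomogeneous c (A.toMvPolynomial i) (c i) :=
    isWeightedHomogeneous_toMvPolynomial fun _ => weight_eq_of_commute_diagonal_zpow hA
  have hsubst : bind₁ A.toMvPolynomial f = C a * f := MvPolynomial.funext fun y => by
    rw [eval_bind₁_toMvPolynomial, hf, eval_mul, eval_C]
  rw [← eval_bind₁_toMvPolynomial, ← weightedHomogeneousComponent_bind₁ hgraded, hsubst,
    weightedHomogeneousComponent_C_mul, eval_mul, eval_C]

end InfiniteField

theorem stmt_8_general {K σ ι : Type*} [Field K] [Infinite K] [Fintype σ] [DecidableEq σ]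
    (A : ι → Matrix σ σ K) (c : σ → ℤ) (r : Kˣ → Matrix σ σ K)
    (hrdiag : ∀ l, r l = diagonal fun i => ((l ^ c i : Kˣ) : K))
    (hcomm : ∀ g l, Commute (A g) (r l)) (χ : ι → K) (v : σ → K) :
    (∃ f : MvPolynomial σ K, (∀ g x, eval (A g *ᵥ x) f = χ g * eval x f) ∧ eval v f ≠ 0) ↔
      ∃ m : ℤ, ∃ f : MvPolynomial σ K,
        (∀ g x, eval (A g *ᵥ x) f = χ g * eval x f) ∧
        (∀ l x, eval (r l *ᵥ x) f = ((l ^ m : Kˣ) : K) * eval x f) ∧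
        eval v f ≠ 0 := by
  constructor
  · rintro ⟨f, hf, hv⟩
    obtain rfl : r = fun l => diagonal fun i => ((l ^ c i : Kˣ) : K) := funext hrdiag
    obtain ⟨m, hm⟩ := exists_eval_weightedHomogeneousComponent_ne_zero c hv
    exact ⟨m, weightedHomogeneousComponent c m f,
      fun g => eval_mulVec_weightedHomogeneousComponent (hcomm g) (hf g) m,
      eval_diagonal_zpow_mulVec (weightedHomogeneousComponent_isWeightedHomogeneous m f), hm⟩
  · rintro ⟨m, f, hf, -, hv⟩
    exact ⟨f, hf, hv⟩

/-- a point is `θ`-semistable for `G` iff some `(θ,k)`-equivariant polynomial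
which is moreover an eigenvector of weight `m` for the `r`-action is nonzero at it
(i.e. the `G`-semistable locus is the union of `Γ`-semistable loci over all lifts). -/
theorem stmt_8 (n d : ℕ) (hn : 1 ≤ n) (hd : 1 ≤ d)
    (G : Subgroup (GL (Fin n) ℂ))
    (c : Fin n → ℤ)
    (r : ℂˣ →* GL (Fin n) ℂ)
    (hrdiag : ∀ l : ℂˣ,
      ((r l : GL (Fin n) ℂ) : Matrix (Fin n) (Fin n) ℂ)
        = Matrix.diagonal fun i => ((l ^ c i : ℂˣ) : ℂ))
    (hrinj : Function.Injective r)
    (hcomm : ∀ g ∈ G, ∀ l : ℂˣ, g * r l = r l * g)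
    (hGr : (G : Set (GL (Fin n) ℂ)) ∩ Set.range r = r '' {l : ℂˣ | l ^ d = 1})
    (θ : ↥G →* ℂˣ) (v : Fin n → ℂ) :
    IsSemistable G θ v ↔
      ∃ k : ℕ, 1 ≤ k ∧ ∃ m : ℤ, ∃ f : MvPolynomial (Fin n) ℂ,
        IsEquivariant G θ k f ∧
        (∀ (l : ℂˣ) (x : Fin n → ℂ),
          eval (Matrix.mulVec (((r l : GL (Fin n) ℂ) : Matrix (Fin n) (Fin n) ℂ)) x) f
            = ((l ^ m : ℂˣ) : ℂ) * eval x f) ∧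
        eval v f ≠ 0 :=
  exists_congr fun k => and_congr_right fun _ =>
    stmt_8_general (fun h : G => (h : GL (Fin n) ℂ).val) c (fun l => (r l).val) hrdiag
      (fun h l => congrArg Units.val (hcomm h h.2 l)) (fun h => (θ h : ℂ) ^ k) v
end

section
/- Let Γ be a group, let Z be a subgroup of Γ contained in the center of Γ, and let G be a subgroup of Γ such that every element of Γ can be written as a product g·z with g ∈ G and z ∈ Z. Let B' be a solvable subgroup of G that is maximal among all solvable subgroups of G. Then the subgroup B of Γ generated by B' and Z satisfies: (i) B is solvable; (ii) B ∩ G = B'; and (iii) B is maximal among all solvable subgroups of Γ. -/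
/-! The product `B' Z` is solvable, being an extension of a quotient of `B'` by `Z`. Intersecting
with `G` turns a solvable subgroup of `Γ` containing `B'` into a solvable subgroup of `G` containing
`B'`, hence into `B'` itself. As `Γ = G Z`, Dedekind's modular law recovers any subgroup `C ≥ Z`
from its intersection with `G`, as `C = (C ∩ G) Z`. -/

section

variable {Γ : Type*} [Group Γ]

theorem isSolvable_sup_of_le_normalizer {H N : Subgroup Γ} [Group.IsSolvable H]
    [Group.IsSolvable N] (hHN : H ≤ Subgroup.normalizer N) : Group.IsSolvable ↥(H ⊔ N) := by
  have := Subgroup.normal_subgroupOf_of_le_normalizer hHN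
  have := Subgroup.normal_subgroupOf_sup_of_le_normalizer hHN
  let secondIso := QuotientGroup.quotientInfEquivProdNormalizerQuotient H N hHN
  have hquot : Group.IsSolvable (↥(H ⊔ N) ⧸ N.subgroupOf (H ⊔ N)) :=
    Group.isSolvable_of_surjective (f := secondIso.toMonoidHom) secondIso.surjective
  exact Group.isSolvable_of_ker_le_range (Subgroup.inclusion (le_sup_right : N ≤ H ⊔ N))
    (QuotientGroup.mk' (N.subgroupOf (H ⊔ N)))
    (by rw [QuotientGroup.ker_mk', Subgroup.inclusion_range])

theorem isSolvable_of_le {H K : Subgroup Γ} (hHK : H ≤ K) [Group.IsSolvable K] :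
    Group.IsSolvable H :=
  Group.isSolvable_of_isSolvable_injective (Subgroup.inclusion_injective hHK)

theorem isSolvable_of_le_center {Z : Subgroup Γ} (hZ : Z ≤ Subgroup.center Γ) :
    Group.IsSolvable Z :=
  Group.isSolvable_of_comm fun a b => Subtype.ext (Subgroup.mem_center_iff.mp (hZ b.2) a)

theorem le_normalizer_of_le_center {Z : Subgroup Γ} (hZ : Z ≤ Subgroup.center Γ)
    (H : Subgroup Γ) : H ≤ Subgroup.normalizer Z :=
  have : Z.Normal := ⟨fun z hz g => by
    rwa [Subgroup.mem_center_iff.mp (hZ hz) g, mul_inv_cancel_right]⟩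
  Subgroup.le_normalizer_of_normal

theorem inf_sup_eq_of_forall_mem_eq_mul {C G Z : Subgroup Γ} (hZC : Z ≤ C)
    (hC : ∀ c ∈ C, ∃ g ∈ G, ∃ z ∈ Z, c = g * z) : C ⊓ G ⊔ Z = C := by
  refine le_antisymm (sup_le inf_le_left hZC) fun c hc => ?_
  obtain ⟨g, hg, z, hz, rfl⟩ := hC c hc
  have hgC : g ∈ C := (mul_mem_cancel_right (hZC hz)).mp hc
  exact Subgroup.mul_mem_sup ⟨hgC, hg⟩ hz

theorem inf_eq_of_maximal_isSolvable {B' C G : Subgroup Γ} (hB'G : B' ≤ G)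
    (hB'max : ∀ D : Subgroup Γ, D ≤ G → Group.IsSolvable D → B' ≤ D → D = B')
    [Group.IsSolvable C] (hB'C : B' ≤ C) : C ⊓ G = B' :=
  hB'max _ inf_le_right (isSolvable_of_le inf_le_left) (le_inf hB'C hB'G)

theorem stmt_10_general {Z G B' : Subgroup Γ} [Group.IsSolvable Z] [Group.IsSolvable B']
    (hB'Z : B' ≤ Subgroup.normalizer Z)
    (hdecomp : ∀ γ : Γ, ∃ g ∈ G, ∃ z ∈ Z, γ = g * z)
    (hB'G : B' ≤ G)
    (hB'max : ∀ C : Subgroup Γ, C ≤ G → Group.IsSolvable C → B' ≤ C → C = B') :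
    Group.IsSolvable ↥(B' ⊔ Z) ∧
    (B' ⊔ Z) ⊓ G = B' ∧
    ∀ C : Subgroup Γ, Group.IsSolvable C → B' ⊔ Z ≤ C → C = B' ⊔ Z := by
  have hsup : Group.IsSolvable ↥(B' ⊔ Z) := isSolvable_sup_of_le_normalizer hB'Z
  refine ⟨hsup, inf_eq_of_maximal_isSolvable hB'G hB'max le_sup_left, fun C _ hle => ?_⟩
  obtain ⟨hB'C, hZC⟩ := sup_le_iff.mp hle
  calc
    C = C ⊓ G ⊔ Z := (inf_sup_eq_of_forall_mem_eq_mul hZC fun c _ => hdecomp c).symm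
    _ = B' ⊔ Z := by rw [inf_eq_of_maximal_isSolvable hB'G hB'max hB'C]

end

/-- Let `Γ` be a group, `Z` a central subgroup, and `G` a subgroup such that
every element of `Γ` is a product `g·z` with `g ∈ G`, `z ∈ Z`.  If `B'` is a maximal solvable
subgroup of `G`, then `B = ⟨B', Z⟩` is solvable, `B ∩ G = B'`, and `B` is maximal among all
solvable subgroups of `Γ`. -/
theorem stmt_10 (Γ : Type*) [Group Γ] (Z G B' : Subgroup Γ)
    (hZcentral : Z ≤ Subgroup.center Γ)
    (hdecomp : ∀ γ : Γ, ∃ g ∈ G, ∃ z ∈ Z, γ = g * z)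
    (hB'G : B' ≤ G)
    (hB'solv : IsSolvable ↥B')
    (hB'max : ∀ C : Subgroup Γ, C ≤ G → IsSolvable ↥C → B' ≤ C → C = B') :
    IsSolvable ↥(B' ⊔ Z) ∧
    (B' ⊔ Z) ⊓ G = B' ∧
    ∀ C : Subgroup Γ, IsSolvable ↥C → B' ⊔ Z ≤ C → C = B' ⊔ Z :=
  have : Group.IsSolvable B' := hB'solv
  have : Group.IsSolvable Z := isSolvable_of_le_center hZcentral
  stmt_10_general (le_normalizer_of_le_center hZcentral B') hdecomp hB'G hB'max
end

section
/- Let W ∈ ℂ[x_1,…,x_N] be a polynomial, let S ⊆ {1,…,N}, and let λ_1,…,λ_N ∈ ℂˣ satisfy λ_i = 1 for i ∈ S and λ_i ≠ 1 for i ∉ S. Assume that W(λ_1 x_1,…,λ_N x_N) = W(x_1,…,x_N) for all x ∈ ℂ^N, and that the restriction of W to the fixed subspace {x : x_j = 0 for all j ∉ S} is a constant function. Then for every i ∈ {1,…,N}, the partial derivative ∂W/∂x_i vanishes at every point of the fixed subspace {x : x_j = 0 for all j ∉ S}; i.e., dW = 0 on the fixed locus of the diagonal symmetry. -/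
open MvPolynomial

/-!
Restrict `W` to the line through a point `x` of the fixed subspace in the `i`-th coordinate
direction, so that `∂W/∂x_i` becomes the derivative of a one-variable polynomial `p`. If `i ∈ S`,
the line stays in the fixed subspace and `p` is constant. If `i ∉ S`, the symmetry preserves the
line and scales its parameter by `λ_i`, so `p(λ_i s) = p(s)`; comparing linear coefficients gives
`λ_i p'(0) = p'(0)`, whence `p'(0) = 0` because `λ_i ≠ 1`.
-/

theorem derivation_aeval_eq_aeval_pderiv_smul {R A M σ : Type*} [CommSemiring R]
    [CommSemiring A] [Algebra R A] [AddCommMonoid M] [Module R M] [Module A M]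
    (D : Derivation R A M) (f : σ → A) (i : σ) (hf : ∀ j, j ≠ i → D (f j) = 0)
    (W : MvPolynomial σ R) :
    D (aeval f W) = aeval f (pderiv i W) • D (f i) := by
  induction W using MvPolynomial.induction_on with
  | C a => simp
  | add p q hp hq => simp only [map_add, hp, hq, add_smul]
  | mul_X p j hp =>
    have hX : D (f j) = aeval f (pderiv i (X j : MvPolynomial σ R)) • D (f i) := by
      by_cases hj : j = i
      · simp [hj]
      · simp [hf j hj, pderiv_X_of_ne hj]
    simp only [map_mul, aeval_X, Derivation.leibniz, smul_eq_mul, map_add, hp, hX, add_smul,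
      mul_smul]

section CoordLine

variable {R σ : Type*} [CommSemiring R] [DecidableEq σ]

/-- The restriction of `W` to the line through `x` parallel to the `i`-th coordinate axis, as a
polynomial in one variable. The parameter is the value of the `i`-th coordinate, so the line passes
through `x` at the parameter `x i`, and the value `x i` does not affect the polynomial. -/
noncomputable def coordLine (x : σ → R) (i : σ) (W : MvPolynomial σ R) : Polynomial R :=
  aeval (Function.update (Polynomial.C ∘ x) i Polynomial.X) W

theorem eval_coordLine (x : σ → R) (i : σ) (W : MvPolynomial σ R) (s : R) :
    (coordLine x i W).eval s = eval (Function.update x i s) W := by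
  have hpoint : (fun j => (Function.update (Polynomial.C ∘ x) i Polynomial.X j).eval s) =
      Function.update x i s := by
    funext j
    by_cases hj : j = i
    · simp [hj]
    · simp [Function.update_of_ne hj]
  have hscalar : (Polynomial.evalRingHom s).comp (algebraMap R (Polynomial R)) = RingHom.id R := by
    ext a
    simp
  rw [coordLine, ← Polynomial.coe_evalRingHom, map_aeval, hscalar, ← hpoint]
  rfl

theorem derivative_coordLine (x : σ → R) (i : σ) (W : MvPolynomial σ R) :
    (coordLine x i W).derivative = coordLine x i (pderiv i W) := by
  have hoff : ∀ j, j ≠ i → Polynomial.derivative'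
      (Function.update (Polynomial.C ∘ x) i (Polynomial.X : Polynomial R) j) = 0 := by
    intro j hj
    simp [Function.update_of_ne hj]
  simpa [coordLine] using derivation_aeval_eq_aeval_pderiv_smul Polynomial.derivative' _ i hoff W

theorem eval_derivative_coordLine (x : σ → R) (i : σ) (W : MvPolynomial σ R) :
    (coordLine x i W).derivative.eval (x i) = eval x (pderiv i W) := by
  rw [derivative_coordLine, eval_coordLine, Function.update_eq_self]

end CoordLine

section Vanishing

variable {R σ : Type*} [CommRing R] [IsDomain R] [Infinite R] [DecidableEq σ]
  {W : MvPolynomial σ R} {x : σ → R} {i : σ}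

theorem eval_pderiv_eq_zero_of_eval_update_eq
    (hconst : ∀ s, eval (Function.update x i s) W = eval x W) :
    eval x (pderiv i W) = 0 := by
  have hline : coordLine x i W = Polynomial.C (eval x W) :=
    Polynomial.funext fun s => by rw [eval_coordLine, hconst, Polynomial.eval_C]
  rw [← eval_derivative_coordLine, hline, Polynomial.derivative_C, Polynomial.eval_zero]

theorem eval_pderiv_eq_zero_of_eval_update_mul {c : R} (hc : c ≠ 1) (hxi : x i = 0)
    (hscale : ∀ s, eval (Function.update x i (c * s)) W = eval (Function.update x i s) W) :
    eval x (pderiv i W) = 0 := by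
  have hline : (coordLine x i W).comp (Polynomial.C c * Polynomial.X) = coordLine x i W :=
    Polynomial.funext fun s => by simp [eval_coordLine, hscale]
  have hcoeff : (coordLine x i W).coeff 1 * c = (coordLine x i W).coeff 1 := by
    simpa only [Polynomial.comp_C_mul_X_coeff, pow_one] using
      congrArg (Polynomial.coeff · 1) hline
  have hzero : (coordLine x i W).coeff 1 = 0 := eq_zero_of_mul_eq_self_right hc hcoeff
  rw [← eval_derivative_coordLine, hxi, ← Polynomial.coeff_zero_eq_eval_zero,
    Polynomial.coeff_derivative, hzero, zero_mul]

end Vanishing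

theorem stmt_11_general {R σ : Type*} [CommRing R] [IsDomain R] [Infinite R]
    (W : MvPolynomial σ R) (S : Set σ) (l : σ → R)
    (hlS : ∀ i ∈ S, l i = 1) (hlnS : ∀ i ∉ S, l i ≠ 1)
    (hinv : ∀ x : σ → R, eval (fun i => l i * x i) W = eval x W)
    (hconst : ∀ x y : σ → R, (∀ j ∉ S, x j = 0) → (∀ j ∉ S, y j = 0) → eval x W = eval y W)
    (i : σ) (x : σ → R) (hx : ∀ j ∉ S, x j = 0) :
    eval x (pderiv i W) = 0 := by
  classical
  by_cases hi : i ∈ S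
  · refine eval_pderiv_eq_zero_of_eval_update_eq fun s => hconst _ _ (fun j hj => ?_) hx
    rw [Function.update_of_ne (ne_of_mem_of_not_mem hi hj).symm, hx j hj]
  · have hfixed : ∀ j, l j * x j = x j := fun j => by
      by_cases hj : j ∈ S
      · rw [hlS j hj, one_mul]
      · rw [hx j hj, mul_zero]
    have hline : ∀ s, (fun j => l j * Function.update x i s j) =
        Function.update x i (l i * s) := fun s => by
      funext j
      by_cases hj : j = i
      · simp [hj]
      · simp [Function.update_of_ne hj, hfixed]
    exact eval_pderiv_eq_zero_of_eval_update_mul (hlnS i hi) (hx i hi) fun s => by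
      rw [← hline, hinv]

/-- If `W` is invariant under the diagonal symmetry `x ↦ (λ₁x₁,…,λ_Nx_N)` whose
fixed coordinates are exactly those in `S`, and the restriction of `W` to the fixed subspace
`{x : x_j = 0 for j ∉ S}` is constant, then every partial derivative `∂W/∂x_i` vanishes at
every point of the fixed subspace. -/
theorem stmt_11 (N : ℕ) (W : MvPolynomial (Fin N) ℂ) (S : Set (Fin N))
    (l : Fin N → ℂˣ)
    (hlS : ∀ i ∈ S, l i = 1)
    (hlnS : ∀ i ∉ S, l i ≠ 1)
    (hinv : ∀ x : Fin N → ℂ,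
      eval (fun i => ((l i : ℂˣ) : ℂ) * x i) W = eval x W)
    (hconst : ∀ x y : Fin N → ℂ, (∀ j ∉ S, x j = 0) → (∀ j ∉ S, y j = 0) →
      eval x W = eval y W) :
    ∀ (i : Fin N) (x : Fin N → ℂ), (∀ j ∉ S, x j = 0) →
      eval x (pderiv i W) = 0 :=
  stmt_11_general W S (fun i => (l i : ℂ)) (fun i hi => Units.val_eq_one.mpr (hlS i hi))
    (fun i hi => Units.val_eq_one.not.mpr (hlnS i hi)) hinv hconst
end
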